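/- arXiv:1706.08423 — 2 statements merged into one kernel-verified Lean document; each statement's English description precedes it below -/
import Mathlib

section
/- Let n be an even natural number with n - 1 a prime power, and let g be an element of PΓL(2, n-1) acting on the projective line over F_{n-1} (with n points). If g has an even number of fixed points, then for every odd i, the number of i-cycles of g is even. In particular, the cycle type of g is a disjoint union of pairs of cycles of equal length together with even-length cycles, so g preserves a partition of the n points into n/2 blocks of size 2. -/
/-- The full cycle type of a permutation: the multiset of lengths of the orbits,
i.e. the usual cycle type together with one part `1` for each fixed point. -/
def fullCycleType {α : Type*} [Fintype α] [DecidableEq α] (g : Equiv.Perm α) :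
    Multiset ℕ :=
  g.cycleType + Multiset.replicate (Fintype.card {x // g x = x}) 1

namespace PGL

open Equiv.Perm Function

section Combi
variable {α : Type*} [Fintype α] [DecidableEq α]

lemma minPer_eq (g : Equiv.Perm α) (s : Finset α) (hs : g.IsCycleOn (s : Set α)) (a : α)
    (ha : a ∈ s) : minimalPeriod g a = s.card := by
  apply Nat.dvd_antisymm
  · rw [← isPeriodicPt_iff_minimalPeriod_dvd, IsPeriodicPt, IsFixedPt, iterate_eq_pow,
      hs.pow_apply_eq ha]
  · rw [← hs.pow_apply_eq ha, ← iterate_eq_pow]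
    exact iterate_minimalPeriod

lemma even_exact (g : Equiv.Perm α)
    (h : ∀ i, Odd i → Even (Finset.univ.filter (fun x => (g ^ i) x = x)).card) :
    ∀ i, Odd i → Even (Finset.univ.filter (fun x => minimalPeriod g x = i)).card := by
  intro i
  induction i using Nat.strong_induction_on with
  | _ i ih =>
    intro hi
    have hpos : i ≠ 0 := by rintro rfl; simp at hi
    have h1 := Finset.card_eq_sum_card_fiberwise (f := fun x => minimalPeriod g x)
      (s := Finset.univ.filter (fun x => (g ^ i) x = x)) (t := i.divisors) (by
        intro x hx
        simp only [Finset.coe_filter, Finset.mem_univ, true_and, Set.mem_ofPred_eq] at hx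
        simp only [Finset.mem_coe, Nat.mem_divisors]
        refine ⟨?_, hpos⟩
        rw [← isPeriodicPt_iff_minimalPeriod_dvd, IsPeriodicPt, IsFixedPt, iterate_eq_pow]
        exact hx)
    have h2 : ∀ d ∈ i.divisors, (Finset.univ.filter (fun x => (g ^ i) x = x)).filter
        (fun x => minimalPeriod g x = d) =
        Finset.univ.filter (fun x => minimalPeriod g x = d) := by
      intro d hd
      ext x
      simp only [Finset.mem_filter, Finset.mem_univ, true_and, and_iff_right_iff_imp]
      rintro rfl
      have := (Nat.mem_divisors.1 hd).1
      rw [← isPeriodicPt_iff_minimalPeriod_dvd, IsPeriodicPt, IsFixedPt, iterate_eq_pow] at this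
      exact this
    rw [Finset.sum_congr rfl (fun d hd => by rw [h2 d hd]),
      ← Nat.cons_self_properDivisors hpos, Finset.sum_cons] at h1
    have h3 : Even (∑ d ∈ i.properDivisors,
        (Finset.univ.filter (fun x => minimalPeriod g x = d)).card) := by
      apply Finset.even_sum
      intro d hd
      obtain ⟨hd1, hd2⟩ := Nat.mem_properDivisors.1 hd
      exact ih d hd2 (hi.of_dvd_nat hd1)
    have h4 := h i hi
    rw [h1] at h4
    exact (Nat.even_add.1 h4).2 h3

lemma even_count (g : Equiv.Perm α)
    (h : ∀ i, Odd i → Even (Finset.univ.filter (fun x => minimalPeriod g x = i)).card)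
    (hfix : Even (Fintype.card {x // g x = x})) (i : ℕ) (hi : Odd i) :
    Even (Multiset.count i (g.cycleType +
      Multiset.replicate (Fintype.card {x // g x = x}) 1)) := by
  rw [Multiset.count_add, Multiset.count_replicate]
  by_cases h1 : i = 1
  · subst h1
    have : Multiset.count 1 g.cycleType = 0 := by
      rw [Multiset.count_eq_zero]
      intro hm
      exact absurd (one_lt_of_mem_cycleType hm) (lt_irrefl _)
    simpa [this] using hfix
  · rw [if_neg (Ne.symm h1), add_zero]
    have key : (Finset.univ.filter (fun x => minimalPeriod g x = i)).card =
        Multiset.count i g.cycleType * i := by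
      have hper : ∀ x ∈ g.support, minimalPeriod g x = (g.cycleOf x).support.card := by
        intro x hx
        exact minPer_eq g _ (isCycleOn_support_cycleOf g x) x
          (mem_support_cycleOf_iff.2 ⟨SameCycle.refl _ _, hx⟩)
      have hsup : ∀ x, minimalPeriod g x = i → x ∈ g.support := by
        intro x hx
        rw [Equiv.Perm.mem_support]
        intro hgx
        exact h1 (hx ▸ minimalPeriod_eq_one_iff_isFixedPt.2 hgx)
      have e := Finset.card_eq_sum_card_fiberwise (f := fun x => g.cycleOf x)
        (s := Finset.univ.filter (fun x => minimalPeriod g x = i))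
        (t := g.cycleFactorsFinset.filter (fun c => i = c.support.card)) (by
          intro x hx
          simp only [Finset.coe_filter, Finset.mem_univ, true_and, Set.mem_ofPred_eq] at hx ⊢
          exact ⟨cycleOf_mem_cycleFactorsFinset_iff.2 (hsup x hx),
            hx ▸ hper x (hsup x hx)⟩)
      rw [e, cycleType_def, Multiset.count_map]
      have : ∀ c ∈ g.cycleFactorsFinset.filter (fun c => i = c.support.card),
          ((Finset.univ.filter (fun x => minimalPeriod g x = i)).filter
            (fun x => g.cycleOf x = c)).card = i := by
        intro c hc
        obtain ⟨hc1, hc2⟩ := Finset.mem_filter.1 hc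
        have : (Finset.univ.filter (fun x => minimalPeriod g x = i)).filter
            (fun x => g.cycleOf x = c) = c.support := by
          ext x
          simp only [Finset.mem_filter, Finset.mem_univ, true_and]
          constructor
          · rintro ⟨hx, rfl⟩
            exact mem_support_cycleOf_iff.2 ⟨SameCycle.refl _ _, hsup x hx⟩
          · intro hx
            have hcx := cycle_is_cycleOf hx hc1
            have hxs := mem_cycleFactorsFinset_support_le hc1 hx
            refine ⟨?_, hcx.symm⟩
            rw [hper x hxs, ← hcx, hc2]
        rw [this, ← hc2]
      rw [Finset.sum_congr rfl this, Finset.sum_const, smul_eq_mul]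
      rfl
    have h2 := h i hi
    rw [key] at h2
    rcases Nat.even_mul.1 h2 with h3 | h3
    · exact h3
    · exact absurd hi (Nat.not_odd_iff_even.2 h3)

lemma exists_invol_even (Q : Type*) [Fintype Q] (h : Even (Fintype.card Q)) :
    ∃ s : Q → Q, (∀ q, s (s q) = q) ∧ ∀ q, s q ≠ q := by
  obtain ⟨m, hm⟩ := h
  have e : Q ≃ Fin m ⊕ Fin m := Fintype.equivOfCardEq (by simp [hm])
  refine ⟨fun q => e.symm (e q).swap, fun q => by simp, fun q hq => ?_⟩
  have : (e q).swap = e q := by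
    have := congrArg e hq
    simpa using this
  rcases h : e q with a | a <;> simp [h] at this

lemma exists_invol_size {Q : Type*} [Fintype Q] [DecidableEq Q] (size : Q → ℕ)
    (h : ∀ i, Odd i → Even (Finset.univ.filter (fun q => size q = i)).card) :
    ∃ s : Q → Q, (∀ q, s (s q) = q) ∧ (∀ q, size (s q) = size q) ∧
      ∀ q, s q = q → Even (size q) := by
  have h' : ∀ i, ∃ s : {q // size q = i} → {q // size q = i},
      (∀ q, s (s q) = q) ∧ (Odd i → ∀ q, s q ≠ q) := by
    intro i
    by_cases hi : Odd i
    · obtain ⟨s, h1, h2⟩ := exists_invol_even {q // size q = i} (by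
        rw [Fintype.card_subtype]; exact h i hi)
      exact ⟨s, h1, fun _ => h2⟩
    · exact ⟨id, fun _ => rfl, fun h => absurd h hi⟩
  choose s hs1 hs2 using h'
  have hT : ∀ i (q : {q // size q = i}), s (size q.1) ⟨q.1, rfl⟩ = (s i q).1 := by
    rintro i ⟨q, rfl⟩; rfl
  refine ⟨fun q => s (size q) ⟨q, rfl⟩, fun q => ?_, fun q => (s (size q) ⟨q, rfl⟩).2,
    fun q hq => ?_⟩
  · change (s (size (s (size q) ⟨q, rfl⟩).1) ⟨(s (size q) ⟨q, rfl⟩).1, rfl⟩ : Q) = q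
    rw [hT, hs1]
  · by_contra hne
    exact hs2 _ (Nat.not_even_iff_odd.1 hne) ⟨q, rfl⟩ (Subtype.ext hq)

lemma exists_b (g : Equiv.Perm α)
    (h : ∀ i, Odd i → Even (Finset.univ.filter (fun x => minimalPeriod g x = i)).card) :
    ∃ b : Equiv.Perm α, (∀ x, b (b x) = x) ∧ (∀ x, b x ≠ x) ∧ (∀ x, g (b x) = b (g x)) := by
  classical
  let Q := Quotient (SameCycle.setoid g)
  let mk : α → Q := fun x => Quotient.mk (SameCycle.setoid g) x
  have hmk : ∀ x y, mk x = mk y ↔ SameCycle g x y := fun x y => Quotient.eq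
  have hout : ∀ q : Q, mk q.out = q := fun q => Quotient.out_eq q
  have hz : ∀ (x : α) (k : ℤ), (g ^ k) x = x ↔ (minimalPeriod g x : ℤ) ∣ k := by
    intro x k
    exact MulAction.zpow_smul_eq_iff_minimalPeriod_dvd (a := g) (b := x) (n := k)
  have hzz : ∀ (x : α) (a b : ℤ), (g ^ a) x = (g ^ b) x ↔ (minimalPeriod g x : ℤ) ∣ a - b := by
    intro x a b
    rw [← hz, sub_eq_neg_add, zpow_add, zpow_neg, mul_apply, inv_eq_iff_eq, eq_comm]
  have hfib : ∀ x, (Finset.univ.filter (fun y => SameCycle g x y)).card = minimalPeriod g x := by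
    intro x
    symm
    refine minPer_eq g _ ?_ x (by simpa using SameCycle.refl g x)
    refine ⟨⟨?_, g.injective.injOn, ?_⟩, ?_⟩
    · intro y hy
      simpa using hy
    · intro y hy
      refine ⟨g⁻¹ y, ?_, by simp⟩
      simpa using hy
    · intro y hy z hz
      simp only [Finset.coe_filter, Finset.mem_univ, true_and, Set.mem_ofPred_eq] at hy hz
      exact hy.symm.trans hz
  have hsame : ∀ x y, SameCycle g x y → minimalPeriod g x = minimalPeriod g y := by
    intro x y hxy
    rw [← hfib, ← hfib]
    congr 1
    ext z
    simp only [Finset.mem_filter, Finset.mem_univ, true_and]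
    exact ⟨fun hh => hxy.symm.trans hh, fun hh => hxy.trans hh⟩
  let size : Q → ℕ := fun q => minimalPeriod g q.out
  have hsize : ∀ i, Odd i → Even (Finset.univ.filter (fun q => size q = i)).card := by
    intro i hi
    have e := Finset.card_eq_sum_card_fiberwise (f := mk)
      (s := Finset.univ.filter (fun x => minimalPeriod g x = i))
      (t := Finset.univ.filter (fun q => size q = i)) (by
        intro x hx
        simp only [Finset.coe_filter, Finset.mem_univ, true_and, Set.mem_ofPred_eq] at hx ⊢
        rw [← hx]
        exact hsame _ _ ((hmk _ _).1 (hout _)))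
    have : ∀ q ∈ Finset.univ.filter (fun q => size q = i),
        ((Finset.univ.filter (fun x => minimalPeriod g x = i)).filter
          (fun x => mk x = q)).card = i := by
      intro q hq
      have hq : size q = i := by simpa using hq
      rw [← hq]
      change _ = minimalPeriod g q.out
      rw [← hfib]
      congr 1
      ext x
      simp only [Finset.mem_filter, Finset.mem_univ, true_and]
      constructor
      · rintro ⟨_, hx⟩
        rw [← hmk, hout, hx]
      · intro hx
        exact ⟨(hsame _ _ hx).symm, by rw [← hout q, eq_comm, hmk]; exact hx⟩
    rw [Finset.sum_congr rfl this, Finset.sum_const, smul_eq_mul] at e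
    have h2 := h i hi
    rw [e] at h2
    rcases Nat.even_mul.1 h2 with h3 | h3
    · exact h3
    · exact absurd hi (Nat.not_odd_iff_even.2 h3)
  obtain ⟨s, hs1, hs2, hs3⟩ := exists_invol_size size hsize
  let y : Q → α := fun q => if s q = q then (g ^ ((size q / 2 : ℕ) : ℤ)) q.out else (s q).out
  have hk : ∀ x, ∃ k : ℤ, (g ^ k) (mk x).out = x := fun x => (hmk _ _).1 (hout (mk x))
  choose k hk using hk
  let b : α → α := fun x => (g ^ k x) (y (mk x))
  have hy : ∀ q (m n : ℤ), (g ^ m) q.out = (g ^ n) q.out → (g ^ m) (y q) = (g ^ n) (y q) := by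
    intro q m n hmn
    by_cases hq : s q = q
    · simp only [y, if_pos hq]
      rw [← mul_apply, ← mul_apply, ← zpow_add, ← zpow_add, add_comm m, add_comm n, zpow_add,
        zpow_add, mul_apply, mul_apply, hmn]
    · simp only [y, if_neg hq]
      rw [hzz] at hmn ⊢
      have := hs2 q
      simp only [size] at this
      rw [this]
      exact hmn
  have hK : ∀ q (m : ℤ), b ((g ^ m) q.out) = (g ^ m) (y q) := by
    intro q m
    have e : mk ((g ^ m) q.out) = q := by
      conv_rhs => rw [← hout q]
      rw [hmk]
      exact SameCycle.symm ⟨m, rfl⟩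
    have h1 := hk ((g ^ m) q.out)
    rw [e] at h1
    simp only [b]
    rw [e]
    exact hy q _ _ h1
  have hK0 : ∀ q : Q, b q.out = y q := fun q => by simpa using hK q 0
  have hcomm : ∀ (m : ℤ) x, b ((g ^ m) x) = (g ^ m) (b x) := by
    intro m x
    obtain ⟨q, j, rfl⟩ : ∃ q : Q, ∃ j : ℤ, (g ^ j) q.out = x := ⟨mk x, k x, hk x⟩
    rw [hK, ← mul_apply, ← zpow_add, hK, zpow_add, mul_apply]
  have hby : ∀ q : Q, b (y q) = q.out := by
    intro q
    by_cases hq : s q = q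
    · have h1 : y q = (g ^ ((size q / 2 : ℕ) : ℤ)) q.out := by simp only [y, if_pos hq]
      rw [h1, hK, h1, ← mul_apply, ← zpow_add, hz]
      obtain ⟨c, hc⟩ := hs3 q hq
      change ((size q : ℕ) : ℤ) ∣ _
      refine ⟨1, ?_⟩
      omega
    · have h1 : y q = (s q).out := by simp only [y, if_neg hq]
      rw [h1, hK0]
      have h2 : s (s q) ≠ s q := by rw [hs1]; exact Ne.symm hq
      simp only [y, if_neg h2]
      rw [hs1]
  have hbb : ∀ x, b (b x) = x := by
    intro x
    have : b x = (g ^ k x) (y (mk x)) := rfl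
    rw [this, hcomm, hby, hk]
  have hyne : ∀ q : Q, y q ≠ q.out := by
    intro q hh
    by_cases hq : s q = q
    · have h1 : y q = (g ^ ((size q / 2 : ℕ) : ℤ)) q.out := by simp only [y, if_pos hq]
      rw [h1, hz] at hh
      have hpos : 0 < size q := by
        apply minimalPeriod_pos_of_mem_periodicPts
        exact (Function.Injective.mem_periodicPts g.injective _)
      obtain ⟨c, hc⟩ := hs3 q hq
      have hh' : size q ∣ size q / 2 := by exact_mod_cast hh
      have := Nat.le_of_dvd (by omega) hh'
      omega
    · have h1 : y q = (s q).out := by simp only [y, if_neg hq]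
      rw [h1] at hh
      apply hq
      rw [← hout (s q), hh, hout]
  refine ⟨⟨b, b, hbb, hbb⟩, hbb, ?_, ?_⟩
  · intro x hx
    change (g ^ k x) (y (mk x)) = x at hx
    apply hyne (mk x)
    apply (g ^ k x).injective
    rw [hx, hk]
  · intro x
    have := hcomm 1 x
    simpa using this.symm

end Combi

section Proj
variable {F : Type*} [Field F]

/-- `h` is induced by a bijective-on-lines semilinear map. -/
def IsSemi (h : Equiv.Perm (Projectivization F (Fin 2 → F))) : Prop :=
  ∃ (τ : F ≃+* F) (f : (Fin 2 → F) → (Fin 2 → F)), (∀ u v, f (u + v) = f u + f v) ∧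
    (∀ (c : F) v, f (c • v) = τ c • f v) ∧
    ∀ (v) (hv : v ≠ 0), ∃ hw : f v ≠ 0,
      h (Projectivization.mk F v hv) = Projectivization.mk F (f v) hw

lemma IsSemi.pow {h : Equiv.Perm (Projectivization F (Fin 2 → F))} (H : IsSemi h) (i : ℕ) :
    IsSemi (h ^ i) := by
  induction i with
  | zero => exact ⟨RingEquiv.refl F, id, by simp, by simp, fun v hv => ⟨hv, by simp⟩⟩
  | succ i ih =>
    obtain ⟨τ, f, f1, f2, f3⟩ := H
    obtain ⟨τ', f', f1', f2', f3'⟩ := ih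
    refine ⟨τ'.trans τ, f ∘ f', by simp [f1, f1'], by simp [f2, f2'], fun v hv => ?_⟩
    obtain ⟨hw, e⟩ := f3' v hv
    obtain ⟨hw2, e2⟩ := f3 _ hw
    refine ⟨hw2, ?_⟩
    rw [pow_succ', mul_apply, e, e2]
    rfl

lemma even_of_two (hchar : (2 : F) ≠ 0) [Fintype (Projectivization F (Fin 2 → F))]
    [DecidableEq (Projectivization F (Fin 2 → F))]
    (h : Equiv.Perm (Projectivization F (Fin 2 → F))) (H : IsSemi h)
    (p₁ p₂ : Projectivization F (Fin 2 → F)) (hne : p₁ ≠ p₂) (h₁ : h p₁ = p₁) (h₂ : h p₂ = p₂) :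
    Even (Finset.univ.filter (fun x => h x = x)).card := by
  obtain ⟨τ, f, f1, f2, f3⟩ := H
  induction p₁ using Projectivization.ind with | _ v₁ hv₁ =>
  induction p₂ using Projectivization.ind with | _ v₂ hv₂ =>
  have hli : LinearIndependent F ![v₁, v₂] := by
    rw [LinearIndependent.pair_iff' hv₁]
    intro a ha
    exact hne ((Projectivization.mk_eq_mk_iff' F _ _ hv₂ hv₁).2 ⟨a, ha⟩).symm
  let B := basisOfLinearIndependentOfCardEqFinrank hli (by simp)
  have hB0 : B 0 = v₁ := by simp [B]
  have hB1 : B 1 = v₂ := by simp [B]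
  obtain ⟨w₁, e₁⟩ := f3 v₁ hv₁
  obtain ⟨w₂, e₂⟩ := f3 v₂ hv₂
  rw [e₁, Projectivization.mk_eq_mk_iff'] at h₁
  rw [e₂, Projectivization.mk_eq_mk_iff'] at h₂
  obtain ⟨a, ha⟩ := h₁
  obtain ⟨b, hb⟩ := h₂
  let T : (Fin 2 → F) →ₗ[F] (Fin 2 → F) := B.constr F ![v₁, -v₂]
  have T1 : T v₁ = v₁ := by
    have := B.constr_basis F ![v₁, -v₂] 0
    rw [hB0] at this
    exact this
  have T2 : T v₂ = -v₂ := by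
    have := B.constr_basis F ![v₁, -v₂] 1
    rw [hB1] at this
    exact this
  have hdec : ∀ v, ∃ x y : F, v = x • v₁ + y • v₂ := by
    intro v
    refine ⟨B.repr v 0, B.repr v 1, ?_⟩
    conv_lhs => rw [← B.sum_repr v]
    rw [Fin.sum_univ_two, hB0, hB1]
  have TT : ∀ v, T (T v) = v := by
    intro v
    obtain ⟨x, y, rfl⟩ := hdec v
    simp [T1, T2]
  have Tinj : Function.Injective T := Function.LeftInverse.injective TT
  have fneg : ∀ v, f (-v) = - f v := by
    intro v
    have := f2 (-1) v
    simpa using this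
  have Tf : ∀ v, T (f v) = f (T v) := by
    intro v
    obtain ⟨x, y, rfl⟩ := hdec v
    simp [T1, T2, f1, f2, fneg, ← ha, ← hb]
  let t := Projectivization.map T Tinj
  have ht : ∀ v hv, t (Projectivization.mk F v hv) =
      Projectivization.mk F (T v) (by simpa using (map_ne_zero_iff T Tinj).2 hv) := fun v hv => rfl
  have htt : ∀ p, t (t p) = p := by
    intro p
    induction p using Projectivization.ind with | _ v hv =>
    simp only [ht, TT]
  have hth : ∀ p, t (h p) = h (t p) := by
    intro p
    induction p using Projectivization.ind with | _ v hv =>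
    obtain ⟨w, e⟩ := f3 v hv
    obtain ⟨w', e'⟩ := f3 (T v) (by simpa using (map_ne_zero_iff T Tinj).2 hv)
    rw [e, ht, ht, e']
    simp only [Tf]
  have htfix : ∀ p, t p = p → p = Projectivization.mk F v₁ hv₁ ∨
      p = Projectivization.mk F v₂ hv₂ := by
    intro p hp
    induction p using Projectivization.ind with | _ v hv =>
    rw [ht, Projectivization.mk_eq_mk_iff'] at hp
    obtain ⟨c, hc⟩ := hp
    obtain ⟨x, y, rfl⟩ := hdec v
    simp only [map_add, map_smul, T1, T2] at hc
    have hc' : (c * x - x) • v₁ + (c * y + y) • v₂ = 0 := by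
      have : (c * x - x) • v₁ + (c * y + y) • v₂ =
        c • (x • v₁ + y • v₂) - (x • v₁ + y • -v₂) := by module
      rw [this, hc, sub_self]
    obtain ⟨hx, hy⟩ := LinearIndependent.pair_iff.1 hli _ _ hc'
    by_cases hx0 : x = 0
    · right
      rw [Projectivization.mk_eq_mk_iff']
      exact ⟨y, by simp [hx0]⟩
    · left
      rw [Projectivization.mk_eq_mk_iff']
      have hc1 : c = 1 := by
        have : x * (c - 1) = 0 := by linear_combination hx
        rcases mul_eq_zero.1 this with h | h
        · exact absurd h hx0
        · linear_combination h
      have hy0 : y = 0 := by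
        have : 2 * y = 0 := by rw [hc1] at hy; linear_combination hy
        rcases mul_eq_zero.1 this with h | h
        · exact absurd h hchar
        · exact h
      exact ⟨x, by simp [hy0]⟩
  have ht1 : t (Projectivization.mk F v₁ hv₁) = Projectivization.mk F v₁ hv₁ := by
    rw [ht]; simp only [T1]
  have ht2 : t (Projectivization.mk F v₂ hv₂) = Projectivization.mk F v₂ hv₂ := by
    rw [ht, Projectivization.mk_eq_mk_iff']; exact ⟨-1, by simp [T2]⟩
  have hp1 : h (Projectivization.mk F v₁ hv₁) = Projectivization.mk F v₁ hv₁ := by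
    rw [e₁, Projectivization.mk_eq_mk_iff']; exact ⟨a, ha⟩
  have hp2 : h (Projectivization.mk F v₂ hv₂) = Projectivization.mk F v₂ hv₂ := by
    rw [e₂, Projectivization.mk_eq_mk_iff']; exact ⟨b, hb⟩
  set P₁ := Projectivization.mk F v₁ hv₁
  set P₂ := Projectivization.mk F v₂ hv₂
  set S := Finset.univ.filter (fun x => h x = x)
  have hS2 : ({P₁, P₂} : Finset _) ⊆ S := by
    intro p hp
    simp only [Finset.mem_insert, Finset.mem_singleton] at hp
    rcases hp with rfl | rfl
    · simpa [S] using hp1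
    · simpa [S] using hp2
  have hsum : ∑ x ∈ S \ {P₁, P₂}, (1 : ZMod 2) = 0 := by
    refine Finset.sum_involution (fun p _ => t p) ?_ ?_ ?_ ?_
    · intro _ _; decide
    · intro p hp _ hpt
      simp only [Finset.mem_sdiff, Finset.mem_insert, Finset.mem_singleton] at hp
      exact hp.2 (htfix p hpt)
    · intro p hp
      simp only [Finset.mem_sdiff, Finset.mem_insert, Finset.mem_singleton, S, Finset.mem_filter,
        Finset.mem_univ, true_and] at hp ⊢
      refine ⟨by rw [← hth, hp.1], ?_⟩
      rintro (h' | h')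
      · exact hp.2 (Or.inl (by rw [← htt p, h', ht1]))
      · exact hp.2 (Or.inr (by rw [← htt p, h', ht2]))
    · intro p _
      exact htt p
  rw [Finset.sum_const, nsmul_eq_mul, mul_one, ZMod.natCast_eq_zero_iff_even] at hsum
  rw [← Finset.card_sdiff_add_card_eq_card hS2, Finset.card_pair hne]
  exact hsum.add even_two

end Proj

end PGL

/-- Let `n` be even with `n - 1` a prime power, and let `g ∈ PΓL(2, n-1)` act on the
projective line over `F = F_{n-1}` (so `g` is induced by `v ↦ A · σ(v)` with
`A ∈ GL(2, F)` and `σ` a field automorphism). If `g` has an even number of fixed points,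
then for every odd `i` the number of `i`-cycles of `g` is even; in particular `g`
preserves a partition of the `n` points into `n/2` blocks of size `2`, i.e. commutes
with a fixed-point-free involution. -/
theorem pgammal_even_fixed_points (n : ℕ) (hn : Even n) (F : Type*) [Field F] [Fintype F]
    [DecidableEq F] (hF : Fintype.card F = n - 1)
    [Fintype (Projectivization F (Fin 2 → F))] [DecidableEq (Projectivization F (Fin 2 → F))]
    (hP : Fintype.card (Projectivization F (Fin 2 → F)) = n)
    (σ : F ≃+* F) (A : GL (Fin 2) F) (g : Equiv.Perm (Projectivization F (Fin 2 → F)))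
    (hg : ∀ (v : Fin 2 → F) (hv : v ≠ 0)
      (hw : Matrix.mulVec (A : Matrix (Fin 2) (Fin 2) F) (fun j => σ (v j)) ≠ 0),
      g (Projectivization.mk F v hv) =
        Projectivization.mk F (Matrix.mulVec (A : Matrix (Fin 2) (Fin 2) F)
          (fun j => σ (v j))) hw)
    (hfix : Even (Fintype.card {x // g x = x})) :
    (∀ i, Odd i → Even (Multiset.count i (fullCycleType g))) ∧
    ∃ b : Equiv.Perm (Projectivization F (Fin 2 → F)),
      (∀ x, b (b x) = x) ∧ (∀ x, b x ≠ x) ∧ (∀ x, g (b x) = b (g x)) := by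
  classical
  have hchar : (2 : F) ≠ 0 := by
    intro h2
    have hc : CharP F 2 := CharTwo.of_one_ne_zero_of_two_eq_zero one_ne_zero h2
    have h3 := FiniteField.even_card_of_char_two (F := F) ((ringChar.eq_iff).2 hc)
    have h4 : 0 < Fintype.card F := Fintype.card_pos
    rw [hF] at h3 h4
    obtain ⟨m, hm⟩ := hn
    omega
  have hsemi : PGL.IsSemi g := by
    have hinj : Function.Injective (Matrix.mulVec (A : Matrix (Fin 2) (Fin 2) F)) :=
      Matrix.mulVec_injective_of_isUnit A.isUnit
    refine ⟨σ, fun v => Matrix.mulVec (A : Matrix (Fin 2) (Fin 2) F) (fun j => σ (v j)), ?_, ?_, ?_⟩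
    · intro u v
      rw [← Matrix.mulVec_add]
      congr 1
      ext j
      simp
    · intro c v
      rw [← Matrix.mulVec_smul]
      congr 1
      ext j
      simp
    · intro v hv
      have hw : Matrix.mulVec (A : Matrix (Fin 2) (Fin 2) F) (fun j => σ (v j)) ≠ 0 := by
        intro h0
        apply hv
        have h1 := hinj (h0.trans (Matrix.mulVec_zero _).symm)
        ext j
        have h2 := congrFun h1 j
        simpa using h2
      exact ⟨hw, hg v hv hw⟩
  have hpow : ∀ i, Odd i → Even (Finset.univ.filter (fun x => (g ^ i) x = x)).card := by
    intro i _
    rcases Nat.lt_or_ge 1 (Finset.univ.filter (fun x => (g ^ i) x = x)).card with h1 | h1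
    · obtain ⟨p, hp, q, hq, hpq⟩ := Finset.one_lt_card.1 h1
      exact PGL.even_of_two hchar _ (hsemi.pow i) p q hpq (by simpa using hp) (by simpa using hq)
    · rcases Nat.le_one_iff_eq_zero_or_eq_one.1 h1 with h0 | h0
      · simp [h0]
      · exfalso
        obtain ⟨p, hp⟩ := Finset.card_eq_one.1 h0
        have hm : ∀ x, (g ^ i) x = x ↔ x = p := by
          intro x
          have := Finset.ext_iff.1 hp x
          simpa using this
        have hgp : g p = p := by
          rw [← hm, ← Equiv.Perm.mul_apply, ← pow_succ, pow_succ', Equiv.Perm.mul_apply,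
            (hm p).2 rfl]
        have hone : Fintype.card {x // g x = x} = 1 := by
          rw [Fintype.card_eq_one_iff]
          refine ⟨⟨p, hgp⟩, fun x => Subtype.ext ((hm x.1).1 ?_)⟩
          exact Equiv.Perm.pow_apply_eq_self_of_apply_eq_self x.2 i
        rw [hone] at hfix
        exact absurd hfix (by decide)
  have hper := PGL.even_exact g hpow
  refine ⟨fun i hi => ?_, PGL.exists_b g hper⟩
  exact PGL.even_count g hper hfix i hi
end

section
/- Let n ≥ 5 and let x be an element of S_n whose cycle type is (i, i, n - 2i) with n odd, 2 ≤ i ≤ (n-3)/2, and gcd(i, n) = 1. Then x^i is a cycle of length n - 2i fixing 2i ≥ 4 points; consequently, by Jordan's theorem (a primitive group of degree n containing a cycle fixing at least 3 points contains A_n), x is not contained in any primitive subgroup of S_n other than A_n and S_n. -/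
/-- A subgroup of `S_n` is primitive if it is transitive and all its blocks are trivial. -/
def IsPrimitiveSubgroup {n : ℕ} (G : Subgroup (Equiv.Perm (Fin n))) : Prop :=
  MulAction.IsPretransitive G (Fin n) ∧
    ∀ B : Set (Fin n), MulAction.IsBlock G B → B.Subsingleton ∨ B = Set.univ

section Marggraf
open scoped Pointwise

/-- A `G`-invariant family of equivalence relations, `R a` on the complement of `a`. -/
structure MSys (G : Type*) {α : Type*} [Group G] [MulAction G α] (R : α → α → α → Prop) :
    Prop where
  inv : ∀ (g : G) a u v, R a u v → R (g • a) (g • u) (g • v)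
  refl : ∀ a u, u ≠ a → R a u u
  symm : ∀ a u v, R a u v → R a v u
  trans : ∀ a u v w, R a u v → R a v w → R a u w
  ne : ∀ a u v, R a u v → u ≠ a

variable {G α : Type*} [Group G] [MulAction G α]

theorem MSys.smul_cls {R : α → α → α → Prop} (hR : MSys G R) (g : G) (a u : α) :
    g • {v | R a u v} = {v | R (g • a) (g • u) v} := by
  ext v
  rw [Set.mem_smul_set_iff_inv_smul_mem]
  constructor
  · intro h
    have := hR.inv g _ _ _ h
    simpa using this
  · intro h
    have := hR.inv g⁻¹ _ _ _ h
    simpa using this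

theorem MSys.card_cls {R : α → α → α → Prop} (hR : MSys G R)
    (h2 : ∀ a u b v : α, a ≠ u → b ≠ v → ∃ g : G, g • a = b ∧ g • u = v)
    (a u b v : α) (h : a ≠ u) (h' : b ≠ v) :
    {w | R a u w}.ncard = {w | R b v w}.ncard := by
  obtain ⟨g, rfl, rfl⟩ := h2 a u b v h h'
  rw [← hR.smul_cls g, Set.ncard_smul_set]

/-- connectivity through translates of `D` avoiding `a` -/
def MConn (G : Type*) {α : Type*} [Group G] [MulAction G α] (D : Set α) (a u v : α) : Prop :=
  u ≠ a ∧ v ≠ a ∧ Relation.EqvGen (fun u v => ∃ g : G, u ∈ g • D ∧ v ∈ g • D ∧ a ∉ g • D) u v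

theorem mconn_sys (D : Set α) : MSys G (MConn G D) where
  inv := by
    rintro g a u v ⟨hu, hv, h⟩
    refine ⟨by simpa using hu, by simpa using hv, ?_⟩
    clear hu hv
    induction h with
    | rel x y h =>
      obtain ⟨k, h1, h2, h3⟩ := h
      refine .rel _ _ ⟨g * k, ?_, ?_, ?_⟩ <;> rw [mul_smul, Set.smul_mem_smul_set_iff] <;> assumption
    | refl x => exact .refl _
    | symm x y _ ih => exact .symm _ _ ih
    | trans x y z _ _ ih1 ih2 => exact .trans _ _ _ ih1 ih2
  refl a u h := ⟨h, h, .refl _⟩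
  symm := fun a u v ⟨h1, h2, h3⟩ => ⟨h2, h1, .symm _ _ h3⟩
  trans := fun a u v w ⟨h1, h2, h3⟩ ⟨_, h2', h3'⟩ => ⟨h1, h2', .trans _ _ _ h3 h3'⟩
  ne := fun a u v h => h.1

theorem mconn_total [Finite α] (hG : MulAction.IsPreprimitive G α)
    (h2 : ∀ a u b v : α, a ≠ u → b ≠ v → ∃ g : G, g • a = b ∧ g • u = v)
    (D : Set α) (hD : 2 ≤ D.ncard) (a₀ : α) (ha₀ : a₀ ∉ D)
    (a u v : α) (hu : u ≠ a) (hv : v ≠ a) : MConn G D a u v := by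
  by_contra hcon
  have hS := mconn_sys (G := G) D
  obtain ⟨d, e, hd, he, hde⟩ : ∃ d e, d ∈ D ∧ e ∈ D ∧ d ≠ e := by
    obtain ⟨d, hd, e, he, h⟩ := (Set.one_lt_ncard (Set.toFinite D)).1 (by omega : 1 < D.ncard)
    exact ⟨d, e, hd, he, h⟩
  have hda : d ≠ a₀ := fun h => ha₀ (h ▸ hd)
  have hea : e ≠ a₀ := fun h => ha₀ (h ▸ he)
  -- size bound
  have hsize : 2 * {w | MConn G D a₀ d w}.ncard + 1 ≤ Nat.card α := by
    have e1 := hS.card_cls h2 a₀ d a u hda.symm hu.symm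
    have e2 := hS.card_cls h2 a₀ d a v hda.symm hv.symm
    have dj : Disjoint {w | MConn G D a u w} {w | MConn G D a v w} := by
      rw [Set.disjoint_left]
      intro w h h'
      exact hcon (hS.trans _ _ _ _ h (hS.symm _ _ _ h'))
    have hna : a ∉ {w | MConn G D a u w} ∪ {w | MConn G D a v w} := by
      rintro (h | h) <;> exact h.2.1 rfl
    have := Set.ncard_le_card (insert a ({w | MConn G D a u w} ∪ {w | MConn G D a v w}))
    rw [Set.ncard_insert_of_notMem hna, Set.ncard_union_eq dj] at this
    omega
  -- inclusion
  have hinc : ∀ a1 u1 a, u1 ≠ a1 → a ∉ {w | MConn G D a1 u1 w} →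
      {w | MConn G D a1 u1 w} = {w | MConn G D a u1 w} := by
    intro a1 u1 a h1 ha
    have hua : u1 ≠ a := by rintro rfl; exact ha (hS.refl _ _ h1)
    apply Set.eq_of_subset_of_ncard_le
    · have key : ∀ x y, Relation.EqvGen
          (fun u v => ∃ g : G, u ∈ g • D ∧ v ∈ g • D ∧ a1 ∉ g • D) x y →
          (MConn G D a1 u1 x ↔ MConn G D a1 u1 y) ∧ (MConn G D a1 u1 x → Relation.EqvGen
          (fun u v => ∃ g : G, u ∈ g • D ∧ v ∈ g • D ∧ a ∉ g • D) x y) := by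
        intro x y h
        induction h with
        | rel x y h =>
          obtain ⟨g, hx, hy, hg⟩ := h
          have hall : ∀ x ∈ g • D, ∀ y ∈ g • D, MConn G D a1 u1 x → MConn G D a1 u1 y := by
            intro x hx y hy h
            exact hS.trans _ _ _ _ h ⟨fun h => hg (h ▸ hx), fun h => hg (h ▸ hy),
              .rel _ _ ⟨g, hx, hy, hg⟩⟩
          refine ⟨⟨hall x hx y hy, hall y hy x hx⟩, fun h => .rel _ _ ⟨g, hx, hy, fun hag => ?_⟩⟩
          exact ha (hall x hx a hag h)
        | refl x => exact ⟨Iff.rfl, fun _ => .refl _⟩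
        | symm x y _ ih => exact ⟨ih.1.symm, fun h => .symm _ _ (ih.2 (ih.1.2 h))⟩
        | trans x y z _ _ ih1 ih2 =>
          exact ⟨ih1.1.trans ih2.1, fun h => .trans _ _ _ (ih1.2 h) (ih2.2 (ih1.1.1 h))⟩
      intro w hw
      refine ⟨hua, ?_, (key _ _ hw.2.2).2 (hS.refl _ _ h1)⟩
      rintro rfl; exact ha hw
    · exact (hS.card_cls h2 _ _ _ _ hua.symm h1.symm).le
    · exact Set.toFinite _
  have hblock : MulAction.IsBlock G {w | MConn G D a₀ d w} := by
    rw [MulAction.isBlock_iff_smul_eq_of_nonempty]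
    rintro g ⟨w, hw1, hw2⟩
    obtain ⟨b, hb⟩ : ∃ b, b ∉ g • {w | MConn G D a₀ d w} ∪ {w | MConn G D a₀ d w} := by
      by_contra! hall
      have : g • {w | MConn G D a₀ d w} ∪ {w | MConn G D a₀ d w} = Set.univ :=
        Set.eq_univ_of_forall hall
      have h3 := Set.ncard_union_le (g • {w | MConn G D a₀ d w}) {w | MConn G D a₀ d w}
      rw [this, Set.ncard_univ, Set.ncard_smul_set] at h3
      omega
    rw [Set.mem_union, not_or] at hb
    rw [hS.smul_cls] at hb hw1 ⊢
    have hgd : g • d ≠ g • a₀ := by simpa using hda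
    have i1 := hinc _ _ b hgd hb.1
    have i2 := hinc _ _ b hda hb.2
    rw [i1] at hw1 ⊢
    rw [i2] at hw2 ⊢
    have hdw := hS.trans _ _ _ _ hw1 (hS.symm _ _ _ hw2)
    ext z
    exact ⟨fun h => hS.trans _ _ _ _ (hS.symm _ _ _ hdw) h, fun h => hS.trans _ _ _ _ hdw h⟩
  rcases hG.isTrivialBlock_of_isBlock hblock with h | h
  · refine hde (h (hS.refl _ _ hda) ⟨hda, hea, .rel _ _ ⟨1, ?_, ?_, ?_⟩⟩) <;> simpa
  · have : a₀ ∈ {w | MConn G D a₀ d w} := h ▸ Set.mem_univ _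
    exact this.2.1 rfl

theorem msys_total_of_subset [Finite α] (hG : MulAction.IsPreprimitive G α)
    (h2 : ∀ a u b v : α, a ≠ u → b ≠ v → ∃ g : G, g • a = b ∧ g • u = v)
    {R : α → α → α → Prop} (hR : MSys G R)
    (D : Set α) (hD : 2 ≤ D.ncard) (a₀ : α) (ha₀ : a₀ ∉ D)
    (hall : ∀ a, a ∉ D → ∀ u ∈ D, ∀ v ∈ D, R a u v)
    (a u v : α) (hu : u ≠ a) (hv : v ≠ a) : R a u v := by
  obtain ⟨_, _, h⟩ := mconn_total hG h2 D hD a₀ ha₀ a u v hu hv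
  have key : ∀ x y, Relation.EqvGen
          (fun u v => ∃ g : G, u ∈ g • D ∧ v ∈ g • D ∧ a ∉ g • D) x y →
          x = y ∨ R a x y := by
    intro x y h
    induction h with
    | rel x y h =>
      obtain ⟨g, hx, hy, ha⟩ := h
      rw [Set.mem_smul_set_iff_inv_smul_mem] at hx hy ha
      right
      simpa using hR.inv g _ _ _ (hall _ ha _ hx _ hy)
    | refl x => exact .inl rfl
    | symm x y _ ih => exact ih.imp Eq.symm (hR.symm _ _ _)
    | trans x y z _ _ ih1 ih2 =>
      rcases ih1 with rfl | h1
      · exact ih2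
      rcases ih2 with rfl | h2
      · exact .inr h1
      exact .inr (hR.trans _ _ _ _ h1 h2)
  rcases key _ _ h with rfl | h
  · exact hR.refl _ _ hu
  · exact h

/-- the class structure when Δ is a cycle -/
theorem msys_zpow_class [Finite α] {R : α → α → α → Prop} (hR : MSys G R) (c : G) (s : Set α)
    (hfix : ∀ a ∈ s, c • a = a) (htr : ∀ a ∉ s, ∀ b ∉ s, ∃ j : ℤ, c ^ j • a = b)
    (a u : α) (ha : a ∈ s) (hu : u ∉ s) (hsub : ∀ v, R a u v → v ∉ s)
    (h : Subgroup.zpowers (MulAction.toPerm c : Equiv.Perm α)) :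
    R a u (h.1 u) ↔ h ^ ({v | R a u v}.ncard) = 1 := by
  classical
  revert h
  generalize hf : (MulAction.toPerm c : Equiv.Perm α) = f
  intro h
  have hfz : ∀ (j : ℤ) (x : α), (f ^ j) x = c ^ j • x := by
    intro j x
    have : f ^ j = MulAction.toPerm (c ^ j) := hf ▸ (map_zpow (MulAction.toPermHom G α) c j).symm
    rw [this]; rfl
  have hfixj : ∀ (j : ℤ), ∀ x ∈ s, c ^ j • x = x := by
    intro j x hx
    have : c ∈ MulAction.stabilizer G x := hfix x hx
    exact Subgroup.zpow_mem _ this j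
  have hinv : ∀ (k : Subgroup.zpowers f) x y, R a x y → R a (k.1 x) (k.1 y) := by
    rintro ⟨k, j, rfl⟩ x y hxy
    have := hR.inv (c ^ j) _ _ _ hxy
    rw [hfixj j a ha] at this
    simpa only [hfz] using this
  let H : Subgroup (Subgroup.zpowers f) :=
    { carrier := {k | R a u (k.1 u)}
      one_mem' := hR.refl _ _ (by rintro rfl; exact hu ha)
      mul_mem' := by
        intro x y hx hy
        exact hR.trans _ _ _ _ hx (hinv x _ _ hy)
      inv_mem' := by
        intro x hx
        have := hinv x⁻¹ _ _ hx
        have e : (x⁻¹).1 (x.1 u) = u := Equiv.symm_apply_apply x.1 u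
        rw [e] at this
        exact hR.symm _ _ _ this }
  have hinj : ∀ k l : Subgroup.zpowers f, k.1 u = l.1 u → k = l := by
    rintro ⟨k, j, rfl⟩ ⟨l, i, rfl⟩ hkl
    ext x
    simp only [hfz] at hkl ⊢
    by_cases hx : x ∈ s
    · rw [hfixj _ _ hx, hfixj _ _ hx]
    · obtain ⟨e, rfl⟩ := htr u hu x hx
      rw [smul_smul, smul_smul, ← zpow_add, ← zpow_add, add_comm j, add_comm i, zpow_add, zpow_add,
        mul_smul, mul_smul, hkl]
  have hcard : Nat.card H = {v | R a u v}.ncard := by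
    rw [← Nat.card_coe_set_eq]
    refine Nat.card_congr (Equiv.ofBijective (fun k => ⟨k.1.1 u, k.2⟩) ⟨?_, ?_⟩)
    · intro k l hkl
      exact Subtype.ext (hinj _ _ (congrArg Subtype.val hkl))
    · rintro ⟨v, hv⟩
      obtain ⟨j, rfl⟩ := htr u hu v (hsub v hv)
      have hj : (f ^ j) u = c ^ j • u := hfz j u
      refine ⟨⟨⟨f ^ j, j, rfl⟩, ?_⟩, Subtype.ext hj⟩
      change R a u ((f ^ j) u)
      rw [hj]; exact hv
  set t := {v | R a u v}.ncard with ht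
  have htpos : 0 < t := hcard ▸ Nat.card_pos
  have hHT : (H : Set (Subgroup.zpowers f)) = {k | k ^ t = 1} := by
    apply Set.eq_of_subset_of_ncard_le
    · intro k hk
      have : (⟨k, hk⟩ : H) ^ Nat.card H = 1 := pow_card_eq_one'
      rw [hcard] at this
      exact congrArg Subtype.val this
    · have : Fintype (Subgroup.zpowers f) := Fintype.ofFinite _
      have h1 := IsCyclic.card_pow_eq_one_le (α := Subgroup.zpowers f) htpos
      have h3 : (H : Set (Subgroup.zpowers f)).ncard = t := by
        rw [← hcard, ← Nat.card_coe_set_eq]; rfl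
      rw [h3]
      rw [Set.ncard_eq_toFinset_card']
      convert h1
      ext; simp
    · exact Set.toFinite _
  exact Set.ext_iff.1 hHT h

theorem msys_trivial_or_total [Finite α] (hG : MulAction.IsPreprimitive G α)
    (h2 : ∀ a u b v : α, a ≠ u → b ≠ v → ∃ g : G, g • a = b ∧ g • u = v)
    {R : α → α → α → Prop} (hR : MSys G R) (c : G) (s : Set α)
    (hfix : ∀ a ∈ s, c • a = a) (htr : ∀ a ∉ s, ∀ b ∉ s, ∃ j : ℤ, c ^ j • a = b)
    (hs : 2 ≤ s.ncard) (hD : 2 ≤ sᶜ.ncard)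
    (a₁ u₁ v₁ : α) (hne : u₁ ≠ v₁) (h1 : R a₁ u₁ v₁) (a u v : α) (hu : u ≠ a) (hv : v ≠ a) :
    R a u v := by
  by_contra hcon
  obtain ⟨p, hp, q, hq, hpq⟩ := (Set.one_lt_ncard (Set.toFinite s)).1 (by omega : 1 < s.ncard)
  obtain ⟨d, hd⟩ : ∃ d, d ∉ s := by
    by_contra! h
    have : sᶜ = ∅ := by ext; simp [h]
    simp [this] at hD
  have hfixj : ∀ (j : ℤ), ∀ x ∈ s, c ^ j • x = x := by
    intro j x hx
    have : c ∈ MulAction.stabilizer G x := hfix x hx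
    exact Subgroup.zpow_mem _ this j
  -- Case I is impossible
  have caseI : ∀ {R : α → α → α → Prop}, MSys G R → ∀ a u v, u ≠ a → v ≠ a → ¬ R a u v →
      ∀ a ∈ s, ∀ x ∈ s, ∀ y ∉ s, ¬ R a x y := by
    intro R hR b₀ u₀ v₀ hu₀ hv₀ hn a ha x hx y hy hxy
    apply hn
    -- class size
    have hcls : sᶜ ⊆ {w | R a x w} := by
      intro z hz
      obtain ⟨j, rfl⟩ := htr y hy z hz
      have := hR.inv (c ^ j) _ _ _ hxy
      rwa [hfixj _ _ ha, hfixj _ _ hx] at this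
    have hcls' : sᶜ.ncard < {w | R a x w}.ncard := by
      apply Set.ncard_lt_ncard _ (Set.toFinite _)
      refine ⟨hcls, fun h => ?_⟩
      exact h (hR.refl _ _ (hR.ne _ _ _ hxy)) hx
    refine msys_total_of_subset hG h2 hR sᶜ hD p (by simpa using hp) ?_ _ _ _ hu₀ hv₀
    intro b hb
    have hb : b ∈ s := by simpa using hb
    suffices ∀ u ∉ s, R b d u by
      intro u hu v hv
      exact hR.trans _ _ _ _ (hR.symm _ _ _ (this u hu)) (this v hv)
    -- the class of d for b is too large
    have hdb : d ≠ b := fun h => hd (h ▸ hb)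
    have hc2 := hR.card_cls h2 a x b d (hR.ne _ _ _ hxy).symm hdb.symm
    obtain ⟨z, hz, hzs⟩ : ∃ z, R b d z ∧ z ∈ s := by
      by_contra! h
      have : {w | R b d w} ⊆ sᶜ := fun w hw => h w hw
      have := Set.ncard_le_ncard this (Set.toFinite _)
      omega
    intro u hu
    obtain ⟨j, rfl⟩ := htr d hd u hu
    have := hR.inv (c ^ j) _ _ _ hz
    rw [hfixj _ _ hb, hfixj _ _ hzs] at this
    exact hR.trans _ _ _ _ hz (hR.symm _ _ _ this)
  let F : α → α → α → Prop := fun u a a' => a ≠ u ∧ a' ≠ u ∧ ∀ v, R a u v ↔ R a' u v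
  have hinv' : ∀ (g : G) a u v, R (g • a) (g • u) v ↔ R a u (g⁻¹ • v) := by
    intro g a u v
    refine ⟨fun h => by simpa using hR.inv g⁻¹ _ _ _ h, fun h => by simpa using hR.inv g _ _ _ h⟩
  have hF : MSys G F :=
    { inv := by
        rintro g u a a' ⟨h1, h2, h3⟩
        refine ⟨by simpa using h1, by simpa using h2, fun v => ?_⟩
        rw [hinv', hinv']
        exact h3 _
      refl := fun a u h => ⟨h, h, fun _ => Iff.rfl⟩
      symm := fun a u v ⟨h1, h2, h3⟩ => ⟨h2, h1, fun v => (h3 v).symm⟩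
      trans := fun a u v w ⟨h1, h2, h3⟩ ⟨_, h2', h3'⟩ => ⟨h1, h2', fun v => (h3 v).trans (h3' v)⟩
      ne := fun a u v h => h.1 }
  have hFs : ∀ a ∈ s, ∀ a' ∈ s, F d a a' := by
    intro a ha a' ha'
    have hda : a ≠ d := fun h => hd (h ▸ ha)
    have hda' : a' ≠ d := fun h => hd (h ▸ ha')
    refine ⟨hda, hda', fun v => ?_⟩
    have hsub : ∀ a ∈ s, ∀ v, R a d v → v ∉ s := fun a ha v h hvs =>
      caseI hR _ _ _ hu hv hcon a ha v hvs d hd (hR.symm _ _ _ h)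
    by_cases hvs : v ∈ s
    · exact ⟨fun h => absurd hvs (hsub a ha v h), fun h => absurd hvs (hsub a' ha' v h)⟩
    obtain ⟨j, rfl⟩ := htr d hd v hvs
    have e : ((MulAction.toPerm c : Equiv.Perm α) ^ j) d = c ^ j • d := by
      have : (MulAction.toPerm c : Equiv.Perm α) ^ j = MulAction.toPerm (c ^ j) :=
        (map_zpow (MulAction.toPermHom G α) c j).symm
      rw [this]; rfl
    have k1 := msys_zpow_class hR c s hfix htr a d ha hd (hsub a ha) ⟨_, j, rfl⟩
    have k2 := msys_zpow_class hR c s hfix htr a' d ha' hd (hsub a' ha') ⟨_, j, rfl⟩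
    simp only [e] at k1 k2
    rw [k1, k2, hR.card_cls h2 a d a' d hda hda']
  -- F is not total
  have hFn : ¬ F u₁ a₁ v₁ := by
    rintro ⟨h3, h4, h5⟩
    exact hR.ne _ _ _ (hR.symm _ _ _ ((h5 v₁).1 h1)) rfl
  have hF1 := caseI hF u₁ a₁ v₁ (hR.ne _ _ _ h1).symm hne.symm hFn p hp q hq
  have hpd : p ≠ d := fun h => hd (h ▸ hp)
  have hcc := hF.card_cls h2 p q d p hpq hpd.symm
  have hle : s.ncard ≤ {w | F d p w}.ncard :=
    Set.ncard_le_ncard (fun w hw => hFs p hp w hw) (Set.toFinite _)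
  have hlt : {w | F p q w}.ncard < s.ncard := by
    apply Set.ncard_lt_ncard _ (Set.toFinite _)
    refine ⟨fun w hw => by_contra fun h => hF1 w h hw, fun h => ?_⟩
    exact (h hp).2.1 rfl
  omega


theorem stab_preprimitive [Finite α] (hG : MulAction.IsPreprimitive G α)
    (h2 : ∀ a u b v : α, a ≠ u → b ≠ v → ∃ g : G, g • a = b ∧ g • u = v)
    (c : G) (s : Set α)
    (hfix : ∀ a ∈ s, c • a = a) (htr : ∀ a ∉ s, ∀ b ∉ s, ∃ j : ℤ, c ^ j • a = b)
    (hs : 2 ≤ s.ncard) (hD : 2 ≤ sᶜ.ncard) (a : α) :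
    MulAction.IsPreprimitive (MulAction.stabilizer G a) (SubMulAction.ofStabilizer G a) := by
  have htrans : MulAction.IsPretransitive (MulAction.stabilizer G a)
      (SubMulAction.ofStabilizer G a) := by
    refine ⟨fun x y => ?_⟩
    obtain ⟨g, hg, hxy⟩ := h2 a x a y (Ne.symm x.2) (Ne.symm y.2)
    exact ⟨⟨g, hg⟩, Subtype.ext hxy⟩
  refine { isTrivialBlock_of_isBlock := ?_ }
  intro B hB
  by_cases hsub : B.Subsingleton
  · exact .inl hsub
  right
  rw [Set.not_subsingleton_iff] at hsub
  obtain ⟨u₁, hu₁, v₁, hv₁, hne⟩ := hsub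
  have hblk : ∀ g : G, g • a = a → ∀ x ∈ (Subtype.val '' B : Set α), g • x ∈ (Subtype.val '' B : Set α) →
      ∀ y ∈ (Subtype.val '' B : Set α), g • y ∈ (Subtype.val '' B : Set α) := by
    rintro g hg _ ⟨x, hx, rfl⟩ ⟨x', hx', hxx'⟩ _ ⟨y, hy, rfl⟩
    have e : (⟨g, hg⟩ : MulAction.stabilizer G a) • x = x' := Subtype.ext hxx'.symm
    have h3 := hB.smul_eq_of_mem (g := (⟨g, hg⟩ : MulAction.stabilizer G a)) hx (e ▸ hx')
    refine ⟨(⟨g, hg⟩ : MulAction.stabilizer G a) • y, ?_, rfl⟩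
    rw [← h3]
    exact Set.smul_mem_smul_set hy
  have hmove : ∀ g₁ g₂ : G, g₁ • a = g₂ • a → ∀ x, x ∈ g₁ • (Subtype.val '' B : Set α) →
      x ∈ g₂ • (Subtype.val '' B : Set α) → ∀ y ∈ g₁ • (Subtype.val '' B : Set α),
      y ∈ g₂ • (Subtype.val '' B : Set α) := by
    intro g₁ g₂ hg x hx1 hx2 y hy
    rw [Set.mem_smul_set_iff_inv_smul_mem] at *
    have := hblk (g₂⁻¹ * g₁) (by rw [mul_smul, hg, inv_smul_smul]) _ hx1
      (by rw [mul_smul, smul_inv_smul]; exact hx2) _ hy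
    rwa [mul_smul, smul_inv_smul] at this
  let R : α → α → α → Prop := fun b u v => ∃ g : G, g • a = b ∧
    u ∈ g • (Subtype.val '' B : Set α) ∧ v ∈ g • (Subtype.val '' B : Set α)
  have hR : MSys G R :=
    { inv := by
        rintro k b u v ⟨g, rfl, hu, hv⟩
        refine ⟨k * g, mul_smul _ _ _, ?_, ?_⟩ <;>
        · rw [mul_smul, Set.smul_mem_smul_set_iff]; assumption
      refl := by
        intro b u hub
        obtain ⟨g, rfl, rfl⟩ := h2 a u₁ b u (Ne.symm u₁.2) hub.symm
        exact ⟨g, rfl, Set.smul_mem_smul_set ⟨_, hu₁, rfl⟩, Set.smul_mem_smul_set ⟨_, hu₁, rfl⟩⟩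
      symm := fun b u v ⟨g, h1, h2, h3⟩ => ⟨g, h1, h3, h2⟩
      trans := by
        rintro b u v w ⟨g, rfl, hu, hv⟩ ⟨k, hk, hv', hw⟩
        exact ⟨k, hk, hmove g k hk.symm v hv hv' u hu, hw⟩
      ne := by
        rintro b u v ⟨g, rfl, ⟨_, ⟨x, hx, rfl⟩, rfl⟩, hv⟩ h
        exact x.2 (smul_left_cancel g h) }
  have hne' : (u₁ : α) ≠ v₁ := fun h => hne (Subtype.ext h)
  have h1 : R a u₁ v₁ := ⟨1, one_smul _ _, by simpa using hu₁, by simpa using hv₁⟩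
  apply Set.eq_univ_of_forall
  intro w
  obtain ⟨g, hg, hu, hw⟩ := msys_trivial_or_total hG h2 hR c s hfix htr hs hD a u₁ v₁ hne' h1
    a u₁ w u₁.2 w.2
  have := hmove g 1 (by simpa using hg) u₁ hu (by simpa using hu₁) w hw
  simpa using this

theorem marggraf (k : ℕ) : ∀ {G α : Type _} [Group G] [MulAction G α] [Finite α]
    (_ : MulAction.IsPreprimitive G α) (c : G) (s : Set α)
    (_ : ∀ a ∈ s, c • a = a) (_ : ∀ a ∉ s, ∀ b ∉ s, ∃ j : ℤ, c ^ j • a = b)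
    (_ : s.ncard = k) (_ : 2 ≤ sᶜ.ncard), MulAction.IsMultiplyPretransitive G α (k + 1) := by
  induction k with
  | zero =>
    intro G α _ _ _ hG c s hfix htr hs hD
    rw [zero_add, MulAction.is_one_pretransitive_iff]
    infer_instance
  | succ k ih =>
    intro G α _ _ _ hG c s hfix htr hs hD
    obtain ⟨a, ha⟩ : s.Nonempty := by
      rw [← Set.ncard_pos]; omega
    have hcardα := Set.ncard_add_ncard_compl s
    rw [SubMulAction.ofStabilizer.isMultiplyPretransitive (a := a)]
    rcases Nat.eq_zero_or_pos k with rfl | hk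
    · rw [zero_add, MulAction.is_one_pretransitive_iff]
      refine ⟨fun x y => ?_⟩
      obtain ⟨b, rfl⟩ := Set.ncard_eq_one.1 hs
      obtain rfl : a = b := ha
      obtain ⟨j, hj⟩ := htr x x.2 y y.2
      exact ⟨⟨c ^ j, Subgroup.zpow_mem (MulAction.stabilizer G a) (hfix a rfl) j⟩, Subtype.ext hj⟩
    have hfixj : ∀ (j : ℤ), ∀ x ∈ s, c ^ j • x = x := by
      intro j x hx
      have : c ∈ MulAction.stabilizer G x := hfix x hx
      exact Subgroup.zpow_mem _ this j
    have h2 : MulAction.IsMultiplyPretransitive G α 2 := by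
      apply hG.is_two_pretransitive hs (by omega)
      refine ⟨fun x y => ?_⟩
      obtain ⟨j, hj⟩ := htr x x.2 y y.2
      refine ⟨⟨c ^ j, ?_⟩, Subtype.ext hj⟩
      rw [mem_fixingSubgroup_iff]
      exact hfixj j
    rw [MulAction.is_two_pretransitive_iff] at h2
    have hP := stab_preprimitive hG (fun a u b v h h' => h2 h h') c s hfix htr (by omega) hD a
    refine ih hP ⟨c, hfix a ha⟩ (Subtype.val ⁻¹' s) ?_ ?_ ?_ ?_
    · intro x hx
      exact Subtype.ext (hfix x hx)
    · intro x hx y hy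
      obtain ⟨j, hj⟩ := htr x hx y hy
      refine ⟨j, Subtype.ext ?_⟩
      rw [← hj]; rfl
    · rw [← Set.ncard_image_of_injective _ Subtype.val_injective]
      have : Subtype.val '' ((Subtype.val : SubMulAction.ofStabilizer G a → α) ⁻¹' s) = s \ {a} := by
        ext x
        simp [SubMulAction.mem_ofStabilizer_iff]
      rw [this, Set.ncard_sdiff_singleton_of_mem ha]
      omega
    · rw [← Set.ncard_image_of_injective _ Subtype.val_injective]
      have : Subtype.val '' ((Subtype.val : SubMulAction.ofStabilizer G a → α) ⁻¹' s)ᶜ = sᶜ := by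
        ext x
        simp only [Set.mem_image, Set.mem_compl_iff, Set.mem_preimage, Subtype.exists,
          SubMulAction.mem_ofStabilizer_iff]
        constructor
        · rintro ⟨y, _, h, rfl⟩; exact h
        · intro h
          exact ⟨x, fun e => h (e ▸ ha), h, rfl⟩
      rw [this]; exact hD

end Marggraf

theorem perm_apply_inv_self' {α : Type*} (f : Equiv.Perm α) (a : α) : f (f⁻¹ a) = a :=
  Equiv.apply_symm_apply f a

theorem commutator_threeCycle {α : Type*} [Fintype α] [DecidableEq α] (y z : Equiv.Perm α) (p : α)
    (hy : y p ≠ p) (hz : z p ≠ p) (hint : ∀ a, y a ≠ a → z a ≠ a → a = p) :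
    (y * (z * y⁻¹ * z⁻¹)).IsThreeCycle := by
  have hyz : ∀ a, y a ≠ a → a ≠ p → z a = a := fun a h h' => by
    by_contra h3; exact h' (hint a h h3)
  set q := z p with hq
  have hyq : y q = q := by
    by_contra h
    refine hz (hint q h fun h' => hz ?_)
    exact z.injective h'
  have e1 : z * y⁻¹ * z⁻¹ = Equiv.swap p q * y⁻¹ * Equiv.swap p q := by
    rw [mul_inv_eq_iff_eq_mul]
    ext a
    simp only [Equiv.Perm.mul_apply]
    have hsw : ∀ b, y b ≠ b → Equiv.swap p q b = z b := by
      intro b hb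
      by_cases hbp : b = p
      · subst hbp; simp [hq]
      · rw [hyz b hb hbp, Equiv.swap_apply_of_ne_of_ne hbp]
        rintro rfl; exact hb hyq
    by_cases ha : y a = a
    · have h1 : y⁻¹ a = a := by rw [Equiv.Perm.inv_eq_iff_eq, ha]
      have h3 : y (Equiv.swap p q (z a)) = Equiv.swap p q (z a) := by
        by_contra h
        have h4 := hsw _ h
        rw [Equiv.swap_apply_self] at h4
        have h4 := z.injective h4
        rw [← h4] at h
        exact h ha
      have h5 : y⁻¹ (Equiv.swap p q (z a)) = Equiv.swap p q (z a) := by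
        rw [Equiv.Perm.inv_eq_iff_eq, h3]
      rw [h1, h5, Equiv.swap_apply_self]
    · rw [← hsw a ha, Equiv.swap_apply_self, hsw]
      intro h
      apply ha
      rw [perm_apply_inv_self'] at h
      rw [h, perm_apply_inv_self', ← h]
  have e2 : y * (z * y⁻¹ * z⁻¹) = Equiv.swap q (y p) * Equiv.swap q p := by
    rw [e1, ← mul_assoc, ← mul_assoc, ← Equiv.swap_apply_apply, hyq, Equiv.swap_comm p q,
      Equiv.swap_comm (y p)]
  rw [e2]
  apply Equiv.Perm.isThreeCycle_swap_mul_swap_same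
  · intro h
    rw [← hyq] at h
    exact hz (y.injective h)
  · exact hz
  · exact hy

theorem alt_le_of_small_support {n : ℕ} (G : Subgroup (Equiv.Perm (Fin n)))
    (hG : MulAction.IsPreprimitive G (Fin n)) (k : ℕ)
    (hk : MulAction.IsMultiplyPretransitive G (Fin n) k) (hkn : k ≤ n)
    (y : Equiv.Perm (Fin n)) (hyG : y ∈ G) (hy1 : y ≠ 1) (hyk : y.support.card ≤ k)
    (hyn : 2 * y.support.card ≤ n + 1) : alternatingGroup (Fin n) ≤ G := by
  obtain ⟨p, hp⟩ : ∃ p, y p ≠ p := by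
    by_contra! h; exact hy1 (Equiv.ext h)
  have hps : p ∈ y.support := Equiv.Perm.mem_support.2 hp
  have hd : MulAction.IsMultiplyPretransitive G (Fin n) (y.support.card) :=
    MulAction.isMultiplyPretransitive_of_le (n := k) hyk (by simpa using hkn)
  obtain ⟨t, ht, htc⟩ := Finset.exists_subset_card_eq (s := y.supportᶜ) (n := y.support.card - 1)
    (by rw [Finset.card_compl, Fintype.card_fin]; omega)
  have hce : (y.support.erase p).card = t.card := by rw [htc, Finset.card_erase_of_mem hps]
  let e := Finset.equivOfCardEq hce
  let f : Fin n → Fin n := fun a => if h : a ∈ y.support.erase p then (e ⟨a, h⟩).1 else a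
  have hfp : f p = p := by simp [f]
  have hft : ∀ a ∈ y.support, a ≠ p → f a ∈ t := by
    intro a ha hap
    have : a ∈ y.support.erase p := Finset.mem_erase.2 ⟨hap, ha⟩
    simp only [f, dif_pos this]
    exact (e _).2
  have htn : ∀ a ∈ t, a ∉ y.support := fun a ha => Finset.mem_compl.1 (ht ha)
  have hfinj : Set.InjOn f y.support := by
    intro a ha b hb hab
    by_cases hap : a = p
    · by_cases hbp : b = p
      · rw [hap, hbp]
      · have := htn _ (hft b hb hbp)
        rw [← hab, hap, hfp] at this
        exact absurd hps this
    · by_cases hbp : b = p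
      · have := htn _ (hft a ha hap)
        rw [hab, hbp, hfp] at this
        exact absurd hps this
      · have ha' : a ∈ y.support.erase p := Finset.mem_erase.2 ⟨hap, ha⟩
        have hb' : b ∈ y.support.erase p := Finset.mem_erase.2 ⟨hbp, hb⟩
        simp only [f, dif_pos ha', dif_pos hb'] at hab
        have := e.injective (Subtype.ext hab)
        exact congrArg Subtype.val this
  let E : Fin y.support.card ≃ y.support := y.support.equivFin.symm
  let x1 : Fin y.support.card ↪ Fin n := ⟨fun j => (E j).1, fun a b h => E.injective (Subtype.ext h)⟩
  let x2 : Fin y.support.card ↪ Fin n := ⟨fun j => f (E j).1, fun a b h =>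
    E.injective (Subtype.ext (hfinj (E a).2 (E b).2 h))⟩
  obtain ⟨h, hh⟩ := MulAction.exists_smul_eq G x1 x2
  have hhf : ∀ a ∈ y.support, h.1 a = f a := by
    intro a ha
    have h5 : h.1 (E (E.symm ⟨a, ha⟩)).1 = f (E (E.symm ⟨a, ha⟩)).1 :=
      DFunLike.congr_fun hh (E.symm ⟨a, ha⟩)
    rwa [Equiv.apply_symm_apply] at h5
  have h3 := commutator_threeCycle y (h.1 * y * h.1⁻¹) p hp ?_ ?_
  · refine Equiv.Perm.alternatingGroup_le_of_isPreprimitive_of_isThreeCycle_mem hG h3 ?_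
    have hz : h.1 * y * h.1⁻¹ ∈ G := G.mul_mem (G.mul_mem h.2 hyG) (G.inv_mem h.2)
    exact G.mul_mem hyG (G.mul_mem (G.mul_mem hz (G.inv_mem hyG)) (G.inv_mem hz))
  · have e1 : h.1⁻¹ p = p := by
      rw [Equiv.Perm.inv_eq_iff_eq, hhf p hps, hfp]
    simp only [Equiv.Perm.mul_apply, e1]
    intro h4
    apply hp
    apply h.1.injective
    rw [h4, hhf p hps, hfp]
  · intro a hya hza
    simp only [Equiv.Perm.mul_apply] at hza
    have hb : h.1⁻¹ a ∈ y.support := by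
      rw [Equiv.Perm.mem_support]
      intro h4
      rw [h4, perm_apply_inv_self'] at hza
      exact hza rfl
    have e2 := hhf _ hb
    rw [perm_apply_inv_self'] at e2
    by_cases hbp : h.1⁻¹ a = p
    · rw [e2, hbp, hfp]
    · exact absurd (Equiv.Perm.mem_support.2 hya) (e2 ▸ htn _ (hft _ hb hbp))

/-- Let `n ≥ 5` be odd, `2 ≤ i ≤ (n-3)/2` coprime with `n`, and `x ∈ S_n` of cycle type
`(i, i, n-2i)`. Then `x^i` is a cycle of length `n - 2i` fixing `2i ≥ 4` points, and (by
Jordan's theorem) every primitive subgroup of `S_n` containing `x` contains `A_n`. -/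
theorem cycle_type_iin_power_is_cycle_and_jordan (n i : ℕ) (hn5 : 5 ≤ n) (hodd : Odd n)
    (hi1 : 2 ≤ i) (hi2 : i ≤ (n - 3) / 2) (hcop : Nat.gcd i n = 1)
    (x : Equiv.Perm (Fin n)) (hx : fullCycleType x = {i, i, n - 2 * i}) :
    ((x ^ i).IsCycle ∧ (x ^ i).support.card = n - 2 * i ∧
      Fintype.card {a // (x ^ i) a = a} = 2 * i ∧ 4 ≤ 2 * i) ∧
    ∀ G : Subgroup (Equiv.Perm (Fin n)), x ∈ G → IsPrimitiveSubgroup G →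
      alternatingGroup (Fin n) ≤ G := by
  obtain ⟨m, hm⟩ : ∃ m, m = n - 2 * i := ⟨_, rfl⟩
  have hmn : n = m + 2 * i := by omega
  have hm3 : 3 ≤ m := by omega
  rw [← hm] at hx ⊢
  have hcop' : Nat.Coprime i m := by
    rw [hmn] at hcop
    simpa [Nat.Coprime] using hcop
  unfold fullCycleType at hx
  have hf0 : Fintype.card {a // x a = a} = 0 := by
    by_contra h
    have : 1 ∈ ({i, i, m} : Multiset ℕ) := by
      rw [← hx, Multiset.mem_add]
      exact .inr (Multiset.mem_replicate.2 ⟨h, rfl⟩)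
    simp at this
    omega
  rw [hf0, Multiset.replicate_zero, add_zero] at hx
  obtain ⟨c, τ, hxc, hdis, hc, hcm⟩ := Equiv.Perm.mem_cycleType_iff.1
    (show m ∈ x.cycleType by rw [hx]; simp)
  have hτ : τ.cycleType = {i, i} := by
    have := hdis.cycleType_mul
    rw [← hxc, hx, hc.cycleType, hcm] at this
    have e : ({i, i, m} : Multiset ℕ) = {m} + {i, i} := by
      rw [add_comm]; rfl
    rw [e] at this
    exact (add_left_cancel this).symm
  have hτo : orderOf τ = i := by
    rw [← Equiv.Perm.lcm_cycleType, hτ]; simp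
  have hco : orderOf c = m := by rw [hc.orderOf, hcm]
  have hxi : x ^ i = c ^ i := by
    rw [hxc, hdis.commute.mul_pow, ← hτo, pow_orderOf_eq_one, mul_one]
  have hxm : x ^ m = τ ^ m := by
    rw [hxc, hdis.commute.mul_pow, ← hco, pow_orderOf_eq_one, one_mul]
  have hcyc : (x ^ i).IsCycle := by
    rw [hxi, hc.pow_iff, hco]; exact hcop'
  have hsup : (x ^ i).support.card = m := by
    rw [hxi, Equiv.Perm.support_pow_coprime (by rw [hco]; exact hcop'), hcm]
  have hfixc : Fintype.card {a // (x ^ i) a = a} = 2 * i := by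
    have h1 : Fintype.card {a // (x ^ i) a = a} = ((x ^ i).supportᶜ).card := by
      rw [Fintype.card_subtype]
      congr 1
      ext a; simp
    rw [h1, Finset.card_compl, hsup, Fintype.card_fin]
    omega
  refine ⟨⟨hcyc, hsup, hfixc, by omega⟩, ?_⟩
  rintro G hxG ⟨hGt, hGb⟩
  have hG : MulAction.IsPreprimitive G (Fin n) := { isTrivialBlock_of_isBlock := fun {B} hB => hGb B hB }
  have hxiG : x ^ i ∈ G := G.pow_mem hxG i
  have hk : MulAction.IsMultiplyPretransitive G (Fin n) (2 * i + 1) := by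
    refine marggraf (2 * i) hG ⟨x ^ i, hxiG⟩ ((x ^ i).support : Set (Fin n))ᶜ ?_ ?_ ?_ ?_
    · intro a ha
      simpa using! ha
    · intro a ha b hb
      have ha : (x ^ i) a ≠ a := by simpa using ha
      have hb : (x ^ i) b ≠ b := by simpa using hb
      obtain ⟨j, hj⟩ := hcyc.exists_zpow_eq ha hb
      exact ⟨j, hj⟩
    · rw [← Finset.coe_compl, Set.ncard_coe_finset, Finset.card_compl, hsup, Fintype.card_fin]
      omega
    · rw [compl_compl, Set.ncard_coe_finset, hsup]
      omega
  rcases Nat.lt_or_ge (2 * i + 1) m with hlt | hge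
  · have hs : (x ^ m).support.card ≤ 2 * i := by
      rw [hxm]
      refine (Finset.card_le_card (Equiv.Perm.support_pow_le τ m)).trans ?_
      rw [← Equiv.Perm.sum_cycleType, hτ]
      simp; omega
    refine alt_le_of_small_support G hG (2 * i + 1) hk (by omega) (x ^ m) (G.pow_mem hxG m)
      ?_ (by omega) (by omega)
    rw [hxm]
    intro h
    have h1 := orderOf_dvd_of_pow_eq_one h
    rw [hτo] at h1
    have := Nat.Coprime.eq_one_of_dvd hcop' h1
    omega
  · exact alt_le_of_small_support G hG (2 * i + 1) hk (by omega) (x ^ i) hxiG hcyc.ne_one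
      (by omega) (by omega)
end
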